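/- Let A, B, C be real symmetric traceless 3×3 matrices. Then (‖A‖² + ‖B‖² + ‖C‖²)² ≥ 2‖[A,B]‖² + 2‖[B,C]‖² + 2‖[C,A]‖². -/

import Mathlib

open Matrix BigOperators

/-- Frobenius norm squared of a real `3 × 3` matrix: the sum of the squares of all entries. -/
noncomputable def frobSq (A : Matrix (Fin 3) (Fin 3) ℝ) : ℝ :=
  ∑ i, ∑ j, (A i j) ^ 2

/-- The commutator `[A, B] = A * B - B * A`. -/
def mcomm (A B : Matrix (Fin 3) (Fin 3) ℝ) : Matrix (Fin 3) (Fin 3) ℝ :=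
  A * B - B * A

/-- Frobenius inner product. -/
noncomputable def frobIp (A B : Matrix (Fin 3) (Fin 3) ℝ) : ℝ :=
  ∑ i, ∑ j, A i j * B i j

lemma spec_exists (G : Matrix (Fin 3) (Fin 3) ℝ) (hG : G.IsSymm) :
    ∃ (U : Matrix (Fin 3) (Fin 3) ℝ) (d : Fin 3 → ℝ),
      Uᵀ * U = 1 ∧ U * Uᵀ = 1 ∧ Uᵀ * G * U = diagonal d := by
  have hH : G.IsHermitian := by
    rw [Matrix.IsHermitian, Matrix.conjTranspose_eq_transpose_of_trivial]; exact hG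
  have h1 := hH.conjStarAlgAut_star_eigenvectorUnitary
  rw [Unitary.conjStarAlgAut_star_apply] at h1
  have h2 := Unitary.coe_star_mul_self hH.eigenvectorUnitary
  have h3 := Unitary.coe_mul_star_self hH.eigenvectorUnitary
  rw [Unitary.coe_star] at h3
  rw [Matrix.star_eq_conjTranspose, Matrix.conjTranspose_eq_transpose_of_trivial] at h1 h2 h3
  exact ⟨_, _, h2, h3, h1⟩

lemma frobSq_trace (A : Matrix (Fin 3) (Fin 3) ℝ) : frobSq A = (Aᵀ * A).trace := by
  simp [frobSq, Matrix.trace, Matrix.mul_apply, Fin.sum_univ_three]; ring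

lemma frobSq_conj (U X : Matrix (Fin 3) (Fin 3) ℝ) (h : U * Uᵀ = 1) :
    frobSq (Uᵀ * X * U) = frobSq X := by
  rw [frobSq_trace, frobSq_trace]
  have e : (Uᵀ * X * U)ᵀ * (Uᵀ * X * U) = Uᵀ * (Xᵀ * X * U) := by
    simp only [Matrix.transpose_mul, Matrix.transpose_transpose]
    calc Uᵀ * (Xᵀ * U) * (Uᵀ * X * U) = Uᵀ * Xᵀ * (U * Uᵀ) * X * U := by
          simp only [Matrix.mul_assoc]
      _ = _ := by rw [h]; simp only [Matrix.mul_assoc, Matrix.one_mul]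
  rw [e, Matrix.trace_mul_comm, Matrix.mul_assoc, h, Matrix.mul_one]

lemma mcomm_conj (U X Y : Matrix (Fin 3) (Fin 3) ℝ) (h : U * Uᵀ = 1) :
    mcomm (Uᵀ * X * U) (Uᵀ * Y * U) = Uᵀ * mcomm X Y * U := by
  have e : ∀ X Y : Matrix (Fin 3) (Fin 3) ℝ,
      (Uᵀ * X * U) * (Uᵀ * Y * U) = Uᵀ * (X * Y) * U := by
    intro X Y
    calc (Uᵀ * X * U) * (Uᵀ * Y * U) = Uᵀ * X * (U * Uᵀ) * Y * U := by
          simp only [Matrix.mul_assoc]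
      _ = _ := by rw [h]; simp only [Matrix.mul_assoc, Matrix.one_mul]
  rw [mcomm, mcomm, e, e, Matrix.mul_sub, Matrix.sub_mul]

lemma bw_diag (d : Fin 3 → ℝ) (B : Matrix (Fin 3) (Fin 3) ℝ) :
    frobSq (mcomm (diagonal d) B) ≤ 2 * (frobSq (diagonal d) * frobSq B) := by
  have e1 : frobSq (mcomm (diagonal d) B) = ∑ i, ∑ j, (d i - d j) ^ 2 * (B i j) ^ 2 := by
    simp only [frobSq, mcomm, Matrix.sub_apply, Matrix.diagonal_mul, Matrix.mul_diagonal]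
    refine Finset.sum_congr rfl fun i _ => Finset.sum_congr rfl fun j _ => by ring
  have e2 : frobSq (diagonal d) = d 0 ^ 2 + d 1 ^ 2 + d 2 ^ 2 := by
    simp [frobSq, Fin.sum_univ_three, Matrix.diagonal]
  rw [e1, e2, frobSq, ← mul_assoc, Finset.mul_sum]
  refine Finset.sum_le_sum fun i _ => ?_
  rw [Finset.mul_sum]
  refine Finset.sum_le_sum fun j _ => ?_
  refine mul_le_mul_of_nonneg_right ?_ (sq_nonneg _)
  fin_cases i <;> fin_cases j <;> simp <;>
    nlinarith [sq_nonneg (d 0), sq_nonneg (d 1), sq_nonneg (d 2), sq_nonneg (d 0 + d 1),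
      sq_nonneg (d 0 + d 2), sq_nonneg (d 1 + d 2)]

lemma bw (A B : Matrix (Fin 3) (Fin 3) ℝ) (hA : A.IsSymm) :
    frobSq (mcomm A B) ≤ 2 * (frobSq A * frobSq B) := by
  obtain ⟨U, d, -, h2, h3⟩ := spec_exists A hA
  have := bw_diag d (Uᵀ * B * U)
  rwa [← h3, mcomm_conj _ _ _ h2, frobSq_conj _ _ h2, frobSq_conj _ _ h2, frobSq_conj _ _ h2]
    at this

lemma frobSq_nonneg (A : Matrix (Fin 3) (Fin 3) ℝ) : 0 ≤ frobSq A :=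
  Finset.sum_nonneg fun _ _ => Finset.sum_nonneg fun _ _ => sq_nonneg _

lemma frobSq_lin (V B C : Matrix (Fin 3) (Fin 3) ℝ) (x y z : ℝ) :
    frobSq (x • V - y • B - z • C) = x ^ 2 * frobSq V + y ^ 2 * frobSq B + z ^ 2 * frobSq C
      - 2 * x * y * frobIp V B - 2 * x * z * frobIp V C + 2 * y * z * frobIp B C := by
  simp only [frobSq, frobIp, Fin.sum_univ_three, Matrix.sub_apply, Matrix.smul_apply, smul_eq_mul]
  ring

lemma bessel2 (V B C : Matrix (Fin 3) (Fin 3) ℝ) (h : frobIp B C = 0)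
    (hb : 0 < frobSq B) (hc : 0 < frobSq C) :
    frobIp V B ^ 2 * frobSq C + frobIp V C ^ 2 * frobSq B ≤ frobSq V * (frobSq B * frobSq C) := by
  have h0 := frobSq_nonneg ((frobSq B * frobSq C) • V - (frobSq C * frobIp V B) • B
    - (frobSq B * frobIp V C) • C)
  rw [frobSq_lin, h] at h0
  have hbc := mul_pos hb hc
  by_contra hn
  push Not at hn
  nlinarith [mul_pos hbc (sub_pos.2 hn)]

/-- The functional `B ↦ [A,B] 0 1` and its cyclic analogues, for symmetric `A`, `B`. -/
noncomputable def vmat (A : Matrix (Fin 3) (Fin 3) ℝ) (p q r : Fin 3) :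
    Matrix (Fin 3) (Fin 3) ℝ :=
  fun i j => if i = p ∧ j = p then - A p q else if i = q ∧ j = q then A p q
    else if i = r ∧ j = r then 0
    else if (i = p ∧ j = q) ∨ (i = q ∧ j = p) then (A p p - A q q) / 2
    else if (i = q ∧ j = r) ∨ (i = r ∧ j = q) then A p r / 2
    else - A q r / 2

lemma symm_entries (A : Matrix (Fin 3) (Fin 3) ℝ) (hA : A.IsSymm) :
    A 1 0 = A 0 1 ∧ A 2 0 = A 0 2 ∧ A 2 1 = A 1 2 :=
  ⟨hA.apply 0 1, hA.apply 0 2, hA.apply 1 2⟩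

lemma comm_vmat (A B : Matrix (Fin 3) (Fin 3) ℝ) (hA : A.IsSymm) (hB : B.IsSymm) :
    frobSq (mcomm A B) = 2 * (frobIp (vmat A 0 1 2) B ^ 2 + frobIp (vmat A 1 2 0) B ^ 2
      + frobIp (vmat A 2 0 1) B ^ 2) := by
  obtain ⟨a1, a2, a3⟩ := symm_entries A hA
  obtain ⟨b1, b2, b3⟩ := symm_entries B hB
  simp [frobSq, mcomm, frobIp, vmat, Fin.sum_univ_three, Matrix.mul_apply, a1, a2, a3, b1, b2, b3]
  ring

lemma vmat_norm (A : Matrix (Fin 3) (Fin 3) ℝ) (hA : A.IsSymm) :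
    2 * (frobSq (vmat A 0 1 2) + frobSq (vmat A 1 2 0) + frobSq (vmat A 2 0 1))
      ≤ 3 * frobSq A := by
  obtain ⟨a1, a2, a3⟩ := symm_entries A hA
  simp [frobSq, vmat, Fin.sum_univ_three, a1, a2, a3]
  nlinarith [sq_nonneg (A 0 0 + A 1 1 + A 2 2)]

lemma pair_bound (A B C : Matrix (Fin 3) (Fin 3) ℝ) (hA : A.IsSymm) (hB : B.IsSymm)
    (hC : C.IsSymm) (h : frobIp B C = 0) (hb : 0 < frobSq B) (hc : 0 < frobSq C) :
    frobSq (mcomm A B) * frobSq C + frobSq (mcomm A C) * frobSq B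
      ≤ 3 * frobSq A * (frobSq B * frobSq C) := by
  rw [comm_vmat A B hA hB, comm_vmat A C hA hC]
  have h1 := bessel2 (vmat A 0 1 2) B C h hb hc
  have h2 := bessel2 (vmat A 1 2 0) B C h hb hc
  have h3 := bessel2 (vmat A 2 0 1) B C h hb hc
  have h4 := mul_le_mul_of_nonneg_right (vmat_norm A hA) (mul_pos hb hc).le
  linarith

lemma mcomm_frob_symm (A B : Matrix (Fin 3) (Fin 3) ℝ) :
    frobSq (mcomm A B) = frobSq (mcomm B A) := by
  simp only [frobSq, mcomm, Matrix.sub_apply]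
  refine Finset.sum_congr rfl fun i _ => Finset.sum_congr rfl fun j _ => by ring

lemma frobIp_symm (A B : Matrix (Fin 3) (Fin 3) ℝ) : frobIp A B = frobIp B A := by
  simp only [frobIp, mul_comm]

lemma real_aux1 (a b c p q r : ℝ) (ha : 0 < a) (hb : 0 < b) (hc : 0 < c) (hp : p ≤ 1)
    (hpq : p + q ≤ 1) (hpr : p + r ≤ 1) (h : 1 / 2 ≤ p) :
    2 * (p * (a * b) + q * (b * c) + r * (c * a)) ≤ a ^ 2 + b ^ 2 + c ^ 2 := by
  have hbc := mul_pos hb hc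
  have hca := mul_pos hc ha
  have h1 := mul_le_mul_of_nonneg_right (show q ≤ 1 - p by linarith) hbc.le
  have h2 := mul_le_mul_of_nonneg_right (show r ≤ 1 - p by linarith) hca.le
  have h3 : 0 ≤ (2 * p - 1) * ((a - b) ^ 2 + c ^ 2) :=
    mul_nonneg (by linarith) (by positivity)
  have h4 : 0 ≤ (1 - p) * ((a - b) ^ 2 + (b - c) ^ 2 + (c - a) ^ 2) :=
    mul_nonneg (by linarith) (by positivity)
  nlinarith

lemma real_aux (a b c p q r : ℝ) (ha : 0 < a) (hb : 0 < b) (hc : 0 < c) (hp : p ≤ 1)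
    (hq : q ≤ 1) (hr : r ≤ 1)
    (hpq : p + q ≤ 1) (hpr : p + r ≤ 1) (hqr : q + r ≤ 1) :
    2 * (p * (a * b) + q * (b * c) + r * (c * a)) ≤ a ^ 2 + b ^ 2 + c ^ 2 := by
  by_cases h1 : 1 / 2 ≤ p
  · exact real_aux1 a b c p q r ha hb hc hp hpq hpr h1
  by_cases h2 : 1 / 2 ≤ q
  · have := real_aux1 b c a q r p hb hc ha hq hqr (by linarith) h2
    linarith
  by_cases h3 : 1 / 2 ≤ r
  · have := real_aux1 c a b r p q hc ha hb hr (by linarith) (by linarith) h3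
    linarith
  push Not at h1 h2 h3
  have e1 := mul_le_mul_of_nonneg_right h1.le (mul_pos ha hb).le
  have e2 := mul_le_mul_of_nonneg_right h2.le (mul_pos hb hc).le
  have e3 := mul_le_mul_of_nonneg_right h3.le (mul_pos hc ha).le
  nlinarith [sq_nonneg (a - b), sq_nonneg (b - c), sq_nonneg (c - a)]

lemma ddvv_orth (A B C : Matrix (Fin 3) (Fin 3) ℝ)
    (hA : A.IsSymm) (hB : B.IsSymm) (hC : C.IsSymm)
    (hab : frobIp A B = 0) (hbc : frobIp B C = 0) (hca : frobIp C A = 0) :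
    2 * frobSq (mcomm A B) + 2 * frobSq (mcomm B C) + 2 * frobSq (mcomm C A)
      ≤ (frobSq A + frobSq B + frobSq C) ^ 2 := by
  have p2 := bw A B hA
  have q2 := bw B C hB
  have r2 := bw C A hC
  rcases (frobSq_nonneg A).eq_or_lt with a0 | a0
  · rw [← a0] at p2 r2 ⊢
    nlinarith [sq_nonneg (frobSq B - frobSq C)]
  rcases (frobSq_nonneg B).eq_or_lt with b0 | b0
  · rw [← b0] at p2 q2 ⊢
    nlinarith [sq_nonneg (frobSq A - frobSq C)]
  rcases (frobSq_nonneg C).eq_or_lt with c0 | c0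
  · rw [← c0] at q2 r2 ⊢
    nlinarith [sq_nonneg (frobSq B - frobSq A)]
  have k1 := pair_bound A B C hA hB hC hbc b0 c0
  have k2 := pair_bound B C A hB hC hA hca c0 a0
  have k3 := pair_bound C A B hC hA hB hab a0 b0
  rw [mcomm_frob_symm A C] at k1
  rw [mcomm_frob_symm B A] at k2
  rw [mcomm_frob_symm C B] at k3
  generalize frobSq (mcomm A B) = P at *
  generalize frobSq (mcomm B C) = Q at *
  generalize frobSq (mcomm C A) = R at *
  generalize frobSq A = a at *
  generalize frobSq B = b at *
  generalize frobSq C = c at *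
  obtain ⟨p, rfl⟩ : ∃ p, P = (1 + p) * (a * b) := ⟨P / (a * b) - 1, by field_simp; ring⟩
  obtain ⟨q, rfl⟩ : ∃ q, Q = (1 + q) * (b * c) := ⟨Q / (b * c) - 1, by field_simp; ring⟩
  obtain ⟨r, rfl⟩ : ∃ r, R = (1 + r) * (c * a) := ⟨R / (c * a) - 1, by field_simp; ring⟩
  have habc : 0 < a * b * c := by positivity
  have hp := le_of_mul_le_mul_right p2 (mul_pos a0 b0)
  have hq := le_of_mul_le_mul_right q2 (mul_pos b0 c0)
  have hr := le_of_mul_le_mul_right r2 (mul_pos c0 a0)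
  have hpr : 2 + p + r ≤ 3 := le_of_mul_le_mul_right (by linarith) habc
  have hpq : 2 + p + q ≤ 3 := le_of_mul_le_mul_right (by linarith) habc
  have hqr : 2 + q + r ≤ 3 := le_of_mul_le_mul_right (by linarith) habc
  have := real_aux a b c p q r a0 b0 c0 (by linarith) (by linarith) (by linarith)
    (by linarith) (by linarith) (by linarith)
  linarith

/-- Rotation of a triple of matrices by a matrix `U`. -/
noncomputable def rot (U : Matrix (Fin 3) (Fin 3) ℝ) (T : Fin 3 → Matrix (Fin 3) (Fin 3) ℝ)
    (i : Fin 3) : Matrix (Fin 3) (Fin 3) ℝ := ∑ k, U k i • T k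

lemma rot_ip (U : Matrix (Fin 3) (Fin 3) ℝ) (T : Fin 3 → Matrix (Fin 3) (Fin 3) ℝ)
    (i j : Fin 3) :
    frobIp (rot U T i) (rot U T j) = (Uᵀ * (Matrix.of fun k l => frobIp (T k) (T l)) * U) i j := by
  simp only [frobIp, rot, Fin.sum_univ_three, Matrix.mul_apply, Matrix.of_apply,
    Matrix.transpose_apply, Matrix.add_apply, Matrix.smul_apply, smul_eq_mul]
  ring

lemma rot_comm (U : Matrix (Fin 3) (Fin 3) ℝ) (T : Fin 3 → Matrix (Fin 3) (Fin 3) ℝ)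
    (i j p q : Fin 3) :
    mcomm (rot U T i) (rot U T j) p q
      = (Uᵀ * (Matrix.of fun k l => mcomm (T k) (T l) p q) * U) i j := by
  simp only [mcomm, rot, Fin.sum_univ_three, Matrix.mul_apply, Matrix.of_apply,
    Matrix.transpose_apply, Matrix.add_apply, Matrix.sub_apply, Matrix.smul_apply, smul_eq_mul]
  ring

lemma frobIp_self (A : Matrix (Fin 3) (Fin 3) ℝ) : frobIp A A = frobSq A := by
  simp only [frobIp, frobSq, sq]

lemma rot_sum_sq (U : Matrix (Fin 3) (Fin 3) ℝ) (T : Fin 3 → Matrix (Fin 3) (Fin 3) ℝ)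
    (h : U * Uᵀ = 1) : ∑ i, frobSq (rot U T i) = ∑ i, frobSq (T i) := by
  have e : ∑ i, frobSq (rot U T i)
      = (Uᵀ * (Matrix.of fun k l => frobIp (T k) (T l)) * U).trace := by
    rw [Matrix.trace]
    refine Finset.sum_congr rfl fun i _ => ?_
    rw [← frobIp_self, rot_ip, Matrix.diag_apply]
  rw [e, Matrix.mul_assoc, Matrix.trace_mul_comm, Matrix.mul_assoc, h, Matrix.mul_one, Matrix.trace]
  refine Finset.sum_congr rfl fun i _ => ?_
  simp [frobIp_self]

lemma sum_comm_eq (T : Fin 3 → Matrix (Fin 3) (Fin 3) ℝ) :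
    ∑ i, ∑ j, frobSq (mcomm (T i) (T j))
      = ∑ p, ∑ q, frobSq (Matrix.of fun k l => mcomm (T k) (T l) p q) := by
  simp only [frobSq, Matrix.of_apply, Fin.sum_univ_three]
  ring

lemma rot_sum_comm (U : Matrix (Fin 3) (Fin 3) ℝ) (T : Fin 3 → Matrix (Fin 3) (Fin 3) ℝ)
    (h : U * Uᵀ = 1) : ∑ i, ∑ j, frobSq (mcomm (rot U T i) (rot U T j))
      = ∑ i, ∑ j, frobSq (mcomm (T i) (T j)) := by
  rw [sum_comm_eq, sum_comm_eq]
  refine Finset.sum_congr rfl fun p _ => Finset.sum_congr rfl fun q _ => ?_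
  rw [← frobSq_conj U (Matrix.of fun k l => mcomm (T k) (T l) p q) h]
  congr 1
  ext i j
  exact rot_comm U T i j p q

lemma sum_comm_three (T : Fin 3 → Matrix (Fin 3) (Fin 3) ℝ) :
    ∑ i, ∑ j, frobSq (mcomm (T i) (T j)) = 2 * frobSq (mcomm (T 0) (T 1))
      + 2 * frobSq (mcomm (T 1) (T 2)) + 2 * frobSq (mcomm (T 2) (T 0)) := by
  have h0 : ∀ X, frobSq (mcomm X X) = 0 := by intro X; simp [mcomm, frobSq]
  simp only [Fin.sum_univ_three, h0]
  rw [mcomm_frob_symm (T 1) (T 0), mcomm_frob_symm (T 2) (T 1), mcomm_frob_symm (T 0) (T 2)]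
  ring

lemma rot_symm (U : Matrix (Fin 3) (Fin 3) ℝ) (T : Fin 3 → Matrix (Fin 3) (Fin 3) ℝ)
    (hT : ∀ i, (T i).IsSymm) (i : Fin 3) : (rot U T i).IsSymm := by
  rw [Matrix.IsSymm, rot, Matrix.transpose_sum]
  refine Finset.sum_congr rfl fun k _ => ?_
  rw [Matrix.transpose_smul, hT k]

/-- For real symmetric traceless `3 × 3` matrices `A, B, C`,
`(‖A‖² + ‖B‖² + ‖C‖²)² ≥ 2‖[A,B]‖² + 2‖[B,C]‖² + 2‖[C,A]‖²`. -/
theorem ddvv_traceless_3_3 (A B C : Matrix (Fin 3) (Fin 3) ℝ)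
    (hA : A.IsSymm) (hB : B.IsSymm) (hC : C.IsSymm)
    (hA0 : A.trace = 0) (hB0 : B.trace = 0) (hC0 : C.trace = 0) :
    (frobSq A + frobSq B + frobSq C) ^ 2 ≥
      2 * frobSq (mcomm A B) + 2 * frobSq (mcomm B C) + 2 * frobSq (mcomm C A) := by
  let T : Fin 3 → Matrix (Fin 3) (Fin 3) ℝ := ![A, B, C]
  have hT : ∀ i, (T i).IsSymm := by
    intro i; fin_cases i
    · exact hA
    · exact hB
    · exact hC
  obtain ⟨U, d, -, h2, h3⟩ := spec_exists (Matrix.of fun k l => frobIp (T k) (T l)) (by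
    ext i j
    exact frobIp_symm _ _)
  have hoff : ∀ i j, i ≠ j → frobIp (rot U T i) (rot U T j) = 0 := by
    intro i j hij
    rw [rot_ip, h3, Matrix.diagonal_apply_ne _ hij]
  have key := ddvv_orth (rot U T 0) (rot U T 1) (rot U T 2) (rot_symm U T hT 0)
    (rot_symm U T hT 1) (rot_symm U T hT 2) (hoff 0 1 (by decide)) (hoff 1 2 (by decide))
    (hoff 2 0 (by decide))
  rw [← sum_comm_three (rot U T), rot_sum_comm U T h2, sum_comm_three T,
    ← Fin.sum_univ_three (fun i => frobSq (rot U T i)), rot_sum_sq U T h2,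
    Fin.sum_univ_three] at key
  exact key
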